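/- (Quantitative version of Lemma 5.6) Let u : Θ → ℝ be bounded and d_p-uniformly continuous with modulus ρ^u. Then there exists a constant C, depending only on T, p and ‖u‖_∞, such that for every n ≥ 1, every i ≤ n^{1+1/(5p)}, every partition 0 = s_1 < ⋯ < s_i ≤ T and all x_1,…,x_{i−1}, x ∈ ℝ^d with |x_i|_p ≤ n^{1/2+6/(5p)} (where x_i := (x_1,…,x_{i−1},x)): 0 ≤ u^{n,λ_i}(T,x) − u^{λ_i}(T,x) ≤ ρ^u( C ( n^{−(3p+3)/2} + n^{−1/(p+1)} + n^{−1/(10p)} ) ). -/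

import Mathlib

open MeasureTheory Set Filter Topology

noncomputable section

/-- `ℝ^d` with the Euclidean norm. -/
abbrev E (d : ℕ) := EuclideanSpace ℝ (Fin d)

/-- A point `θ = (t, ω)` of `Θ = [0,T] × Ω`, where `Ω` is the set of continuous
paths `[0,T] → ℝ^d` starting from the origin. -/
structure Theta (T : ℝ) (d : ℕ) where
  t : ℝ
  path : ℝ → E d
  ht : t ∈ Set.Icc 0 T
  cont : ContinuousOn path (Set.Icc 0 T)
  init : path 0 = 0

/-- `‖f‖_q^q := ‖f T‖^q + ∫_0^T ‖f s‖^q ds`. -/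
def pnormPow (T q : ℝ) {d : ℕ} (f : ℝ → E d) : ℝ :=
  ‖f T‖ ^ q + ∫ s in (0:ℝ)..T, ‖f s‖ ^ q

/-- `‖f‖_q := (‖f T‖^q + ∫_0^T ‖f s‖^q ds)^(1/q)`. -/
def pnorm (T q : ℝ) {d : ℕ} (f : ℝ → E d) : ℝ := (pnormPow T q f) ^ (1 / q)

/-- The pseudo-distance `d_p(θ,θ') = |t - t'| + ‖ω_{t∧·} - ω'_{t'∧·}‖_p`. -/
def dpDist (T p : ℝ) {d : ℕ} (θ θ' : Theta T d) : ℝ :=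
  |θ.t - θ'.t| + pnorm T p (fun s => θ.path (min θ.t s) - θ'.path (min θ'.t s))

/-- The set `𝓛_{t,s}` of monotone time changes: for `s > 0`, nondecreasing
`ℓ : [0,T] → ℝ` restricting to an increasing bijection from `[0,t]` onto `[0,s]`
with `ℓ(r) = r - t + s` on `(t,T]`; for `s = 0` the single function `ℓ^{t,0}`. -/
def LL (T t s : ℝ) : Set (ℝ → ℝ) :=
  if s = 0 then {fun r => if r ≤ t then 0 else r - t}
  else {ℓ | MonotoneOn ℓ (Set.Icc 0 T) ∧ StrictMonoOn ℓ (Set.Icc 0 t) ∧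
        Set.BijOn ℓ (Set.Icc 0 t) (Set.Icc 0 s) ∧ ∀ r ∈ Set.Ioc t T, ℓ r = r - t + s}

/-- `‖ℓ - I‖_∞ := sup_{0 ≤ r ≤ T} |ℓ(r) - r|`. -/
def supId (T : ℝ) (ℓ : ℝ → ℝ) : ℝ := ⨆ r : Set.Icc (0:ℝ) T, |ℓ r - (r : ℝ)|

/-- The penalization `Φ(s,η,θ,ℓ) := ‖ℓ - I‖_∞^{2/(3p+3)} + ‖η_{s∧ℓ(·)} - ω_{t∧·}‖_{p+1}^{p+1}`. -/
def Phi (T p : ℝ) {d : ℕ} (s : ℝ) (η : ℝ → E d) (θ : Theta T d) (ℓ : ℝ → ℝ) : ℝ :=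
  (supId T ℓ) ^ (2 / (3 * p + 3)) +
    pnormPow T (p + 1) (fun r => η (min s (ℓ r)) - θ.path (min θ.t r))

/-- The regularization
`u^n(s,η) := sup { u(θ) - n Φ(s,η,θ,ℓ) : θ ∈ Θ \ {𝟎}, ℓ ∈ 𝓛_{t,s} }`. -/
def reg (T p : ℝ) {d : ℕ} (u : Theta T d → ℝ) (n : ℕ) (s : ℝ) (η : ℝ → E d) : ℝ :=
  sSup { x | ∃ θ : Theta T d, ∃ ℓ : ℝ → ℝ, (θ.t, θ.path) ≠ (0, 0) ∧ ℓ ∈ LL T θ.t s ∧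
        x = u θ - (n : ℝ) * Phi T p s η θ ℓ }

/-- A càdlàg path on `[0,T]`: right-continuous with left limits. -/
def Cadlag (T : ℝ) {d : ℕ} (η : ℝ → E d) : Prop :=
  (∀ x ∈ Set.Ico (0:ℝ) T, ContinuousWithinAt η (Set.Ici x) x) ∧
  (∀ x ∈ Set.Ioc (0:ℝ) T, ∃ l : E d, Filter.Tendsto η (nhdsWithin x (Set.Iio x)) (𝓝 l))

/-- The piecewise constant path `η^{λ_i}(x)_s = Σ_j x_j 1_{{s ≥ s_j}}`. -/
def pcPath {d i : ℕ} (sVec : Fin i → ℝ) (xVec : Fin i → E d) : ℝ → E d :=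
  fun r => ∑ j : Fin i, if sVec j ≤ r then xVec j else 0

/-- `L = u^{λ_i}(T,x)`, i.e. `L` is the limit of `u(T, ω^k)` along a sequence of
continuous paths `ω^k ∈ Ω` with `‖η^{λ_i}(x) - ω^k‖_p → 0`. -/
def IsExtValue (T p : ℝ) {d : ℕ} (u : Theta T d → ℝ) (η : ℝ → E d) (L : ℝ) : Prop :=
  ∃ θk : ℕ → Theta T d, (∀ k, (θk k).t = T) ∧
    Filter.Tendsto (fun k => pnorm T p (fun r => η r - (θk k).path r)) Filter.atTop (𝓝 0) ∧
    Filter.Tendsto (fun k => u (θk k)) Filter.atTop (𝓝 L)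

/-!
The quantity `‖·‖_q` is the `L^q` seminorm of the finite measure `1_{(0,T]} ds + δ_T`, which has no
atom at `0`. Hence every `η ∈ L^{p+1}` is a limit of continuous paths starting at `0`, and testing
the supremum defining `u^n(T, η)` with such paths, `t = T` and `ℓ = id` gives the lower bound.

For the upper bound, a competitor `(θ, ℓ)` with `n Φ > 2‖u‖_∞` cannot beat the extended value. All
others have `‖ℓ - I‖_∞ ≤ (2‖u‖_∞ / n)^{(3p+3)/2}`, and `ω_{t∧·}` is within
`(2‖u‖_∞ / n)^{1/(p+1)}` of `η_{T∧ℓ(·)}` in `‖·‖_{p+1}`. A piecewise constant path with `i` jumps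
differs from its time change only within distance `‖ℓ - I‖_∞` of the jump times, whence
`‖η_{T∧ℓ(·)} - η‖_p^p ≤ 2 i^{p-1} |x|_p^p ‖ℓ - I‖_∞`, and the admissible ranges of `i` and `|x|_p`
make this at most a constant times `n^{-1/10}`. So `θ` is close to `(T, η)` in `d_p`, and the
modulus of continuity applies.
-/

section Density

variable {X F : Type*} [MeasurableSpace X] [NormedAddCommGroup F] {μ : Measure X} {q : ENNReal}

lemma eLpNorm_sub_sub_const_le {f g : X → F} (hf : AEStronglyMeasurable f μ)
    (hg : AEStronglyMeasurable g μ) (hq : 1 ≤ q) (hq_top : q ≠ ⊤) (c : F) :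
    eLpNorm (f - fun x => g x - c) q μ ≤
      eLpNorm (f - g) q μ + ‖c‖ₑ * μ univ ^ (1 / q.toReal) := by
  have split : (f - fun x => g x - c) = (f - g) + fun _ => c := by
    ext x
    simp only [Pi.sub_apply, Pi.add_apply]
    abel
  rw [split, ← eLpNorm_const' c (zero_lt_one.trans_le hq).ne' hq_top]
  exact eLpNorm_add_le (hf.sub hg) aestronglyMeasurable_const hq

variable [MetricSpace X] [BorelSpace X] [NormedSpace ℝ F] [IsFiniteMeasure μ]

/-- Adding an atom at `a` to `μ` forces the approximant to be small at `a`, so that subtracting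
its value there costs little. -/
lemma exists_continuous_apply_eq_zero_eLpNorm_sub_le {a : X} (ha : μ {a} = 0) {f : X → F}
    (hf : MemLp f q μ) (hq : 1 ≤ q) (hq_top : q ≠ ⊤) {ε : ENNReal} (hε : ε ≠ 0) :
    ∃ g : X → F, Continuous g ∧ g a = 0 ∧
      eLpNorm (f - g) q μ ≤ ε + ε * μ univ ^ (1 / q.toReal) := by
  set ν : Measure X := μ + Measure.dirac a with hν
  set f₀ : X → F := indicator {a}ᶜ f
  have hf₀_ae : f₀ =ᵐ[μ] f := indicator_ae_eq_of_ae_eq_set (f := f)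
    (ae_eq_univ.2 (by rwa [compl_compl])) |>.trans (by rw [indicator_univ])
  have hf₀_memLp : MemLp f₀ q ν := by
    refine (memLp_indicator_iff_restrict (measurableSet_singleton a).compl).2
      (hf.mono_measure ?_)
    have hdirac : (Measure.dirac a).restrict {a}ᶜ = 0 := by simp [Measure.restrict_eq_zero]
    rw [hν, Measure.restrict_add, hdirac, add_zero]
    exact Measure.restrict_le_self
  obtain ⟨g, hg, hg_memLp⟩ := hf₀_memLp.exists_boundedContinuous_eLpNorm_sub_le hq_top hε
  have hg_zero : ‖g a‖ₑ ≤ ε := by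
    have h := (eLpNorm_mono_measure (f₀ - ⇑g) (Measure.le_add_left le_rfl)).trans hg
    rw [eLpNorm_dirac _ _ (zero_lt_one.trans_le hq).ne'] at h
    simpa [f₀] using h
  refine ⟨fun x => g x - g a, g.continuous.sub continuous_const, sub_self _, ?_⟩
  refine (eLpNorm_sub_sub_const_le hf.1
    (hg_memLp.1.mono_measure (Measure.le_add_right le_rfl)) hq hq_top _).trans ?_
  gcongr
  rw [← eLpNorm_congr_ae (hf₀_ae.sub ae_eq_rfl)]
  exact (eLpNorm_mono_measure _ (Measure.le_add_right le_rfl)).trans hg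

end Density

section PathMeasure

variable {T : ℝ} {F : Type*} [NormedAddCommGroup F] {f : ℝ → F}

/-- The measure `1_{(0,T]} ds + δ_T`, whose `L^q` seminorm is `‖·‖_q`. -/
def pathMeasure (T : ℝ) : Measure ℝ := volume.restrict (Ioc 0 T) + Measure.dirac T

instance (T : ℝ) : IsFiniteMeasure (pathMeasure T) :=
  inferInstanceAs (IsFiniteMeasure (volume.restrict (Ioc 0 T) + Measure.dirac T))

lemma pathMeasure_real_univ (hT : 0 ≤ T) : (pathMeasure T).real univ = T + 1 := by
  rw [pathMeasure, measureReal_add_apply]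
  simp [hT]

lemma pathMeasure_singleton_zero (hT : 0 < T) : pathMeasure T {0} = 0 := by
  simp [pathMeasure, hT.ne']

lemma ae_pathMeasure_of_forall_mem_Icc (hT : 0 ≤ T) {P : ℝ → Prop} (h : ∀ r ∈ Icc 0 T, P r) :
    ∀ᵐ r ∂pathMeasure T, P r := by
  rw [pathMeasure, ae_add_measure_iff, ae_dirac_eq]
  exact ⟨ae_restrict_of_forall_mem measurableSet_Ioc fun r hr => h r (Ioc_subset_Icc_self hr),
    h T ⟨hT, le_rfl⟩⟩

lemma memLp_pathMeasure_of_bound (hT : 0 ≤ T) {B : ℝ}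
    (hf : AEStronglyMeasurable f (volume.restrict (Ioc 0 T))) (hB : ∀ r ∈ Icc 0 T, ‖f r‖ ≤ B)
    (q : ENNReal) : MemLp f q (pathMeasure T) :=
  .of_bound (aestronglyMeasurable_add_measure_iff.2 ⟨hf, aestronglyMeasurable_dirac⟩) B
    (ae_pathMeasure_of_forall_mem_Icc hT hB)

lemma memLp_pathMeasure_of_continuousOn (hT : 0 ≤ T) (hf : ContinuousOn f (Icc 0 T))
    (q : ENNReal) : MemLp f q (pathMeasure T) := by
  obtain ⟨B, hB⟩ := isCompact_Icc.exists_bound_of_continuousOn hf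
  exact memLp_pathMeasure_of_bound hT
    ((hf.mono Ioc_subset_Icc_self).aestronglyMeasurable measurableSet_Ioc) hB q

end PathMeasure

section PathNorm

variable {T p q : ℝ} {d : ℕ} {f g h : ℝ → E d}

lemma pnormPow_nonneg (hT : 0 ≤ T) (q : ℝ) (f : ℝ → E d) : 0 ≤ pnormPow T q f :=
  add_nonneg (by positivity) (intervalIntegral.integral_nonneg hT fun _ _ => by positivity)

lemma pnorm_nonneg (hT : 0 ≤ T) (q : ℝ) (f : ℝ → E d) : 0 ≤ pnorm T q f :=
  Real.rpow_nonneg (pnormPow_nonneg hT q f) _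

lemma pnorm_rpow_self (hT : 0 ≤ T) (hq : q ≠ 0) (f : ℝ → E d) :
    pnorm T q f ^ q = pnormPow T q f := by
  rw [pnorm, one_div, Real.rpow_inv_rpow (pnormPow_nonneg hT q f) hq]

lemma pnormPow_eq_integral (hT : 0 ≤ T) (hq : 0 ≤ q)
    (hf : MemLp f (ENNReal.ofReal q) (pathMeasure T)) :
    pnormPow T q f = ∫ r, ‖f r‖ ^ q ∂pathMeasure T := by
  have hint : Integrable (fun r => ‖f r‖ ^ q) (pathMeasure T) := by
    simpa only [ENNReal.toReal_ofReal hq] using hf.integrable_norm_rpow'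
  obtain ⟨hint_Ioc, hint_dirac⟩ := integrable_add_measure.1 hint
  rw [pathMeasure, integral_add_measure hint_Ioc hint_dirac, integral_dirac, pnormPow,
    intervalIntegral.integral_of_le hT, add_comm]

lemma pnorm_eq_lpNorm (hT : 0 ≤ T) (hq : 0 < q)
    (hf : MemLp f (ENNReal.ofReal q) (pathMeasure T)) :
    pnorm T q f = lpNorm f (ENNReal.ofReal q) (pathMeasure T) := by
  rw [lpNorm_eq_integral_norm_rpow_toReal (by simpa using hq) ENNReal.ofReal_ne_top hf.1,
    ENNReal.toReal_ofReal hq.le, pnorm, pnormPow_eq_integral hT hq.le hf, one_div]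

lemma pnorm_sub_comm (T q : ℝ) (f g : ℝ → E d) :
    pnorm T q (f - g) = pnorm T q (g - f) := by
  simp only [pnorm, pnormPow, Pi.sub_apply, norm_sub_rev]

lemma pnorm_sub_le_add (hT : 0 ≤ T) (hq : 1 ≤ q)
    (hf : MemLp f (ENNReal.ofReal q) (pathMeasure T))
    (hg : MemLp g (ENNReal.ofReal q) (pathMeasure T))
    (hh : MemLp h (ENNReal.ofReal q) (pathMeasure T)) :
    pnorm T q (f - h) ≤ pnorm T q (f - g) + pnorm T q (g - h) := by
  have hq₀ : 0 < q := by linarith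
  rw [pnorm_eq_lpNorm hT hq₀ (hf.sub hh), pnorm_eq_lpNorm hT hq₀ (hf.sub hg),
    pnorm_eq_lpNorm hT hq₀ (hg.sub hh)]
  exact lpNorm_sub_le_lpNorm_sub_add_lpNorm_sub hf hg (ENNReal.one_le_ofReal.2 hq)

lemma pnorm_congr (hT : 0 ≤ T) (hfg : EqOn f g (Icc 0 T)) : pnorm T q f = pnorm T q g := by
  have hint : ∫ r in (0 : ℝ)..T, ‖f r‖ ^ q = ∫ r in (0 : ℝ)..T, ‖g r‖ ^ q :=
    intervalIntegral.integral_congr fun r hr => by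
      simp only [hfg (uIcc_of_le hT ▸ hr)]
  rw [pnorm, pnorm, pnormPow, pnormPow, hint, hfg ⟨hT, le_rfl⟩]

lemma pnorm_le_mul_pnorm (hT : 0 ≤ T) (hp : 0 < p) (hpq : p ≤ q)
    (hf : MemLp f (ENNReal.ofReal q) (pathMeasure T)) :
    pnorm T p f ≤ (T + 1) ^ (1 / p - 1 / q) * pnorm T q f := by
  have hq : 0 < q := hp.trans_le hpq
  have hpq' : ENNReal.ofReal p ≤ ENNReal.ofReal q := ENNReal.ofReal_le_ofReal hpq
  have hexp : 0 ≤ 1 / p - 1 / q := sub_nonneg.2 (one_div_le_one_div_of_le hp hpq)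
  rw [pnorm_eq_lpNorm hT hp (hf.mono_exponent hpq'), pnorm_eq_lpNorm hT hq hf,
    ← pathMeasure_real_univ hT, ← toReal_eLpNorm hf.1, ← toReal_eLpNorm hf.1, Measure.real,
    ENNReal.toReal_rpow, mul_comm, ← ENNReal.toReal_mul]
  refine ENNReal.toReal_mono (ENNReal.mul_ne_top hf.2.ne
    (ENNReal.rpow_ne_top_of_nonneg hexp (measure_ne_top _ _))) ?_
  simpa only [ENNReal.toReal_ofReal hp.le, ENNReal.toReal_ofReal hq.le] using
    eLpNorm_le_eLpNorm_mul_rpow_measure_univ hpq' hf.1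

end PathNorm

namespace Theta

variable {T : ℝ} {d : ℕ}

/-- The stopped path `ω_{t∧·}` of `θ = (t, ω)`. -/
def stopped (θ : Theta T d) : ℝ → E d := fun r => θ.path (min θ.t r)

lemma nonneg_horizon (θ : Theta T d) : 0 ≤ T := θ.ht.1.trans θ.ht.2

lemma stopped_eqOn_path {θ : Theta T d} (ht : θ.t = T) : EqOn θ.stopped θ.path (Icc 0 T) :=
  fun r hr => by rw [stopped, ht, min_eq_right hr.2]

lemma memLp_stopped (θ : Theta T d) (q : ENNReal) : MemLp θ.stopped q (pathMeasure T) :=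
  memLp_pathMeasure_of_continuousOn θ.nonneg_horizon (θ.cont.comp (by fun_prop) fun _ hr =>
    ⟨le_min θ.ht.1 hr.1, (min_le_left _ _).trans θ.ht.2⟩) q

end Theta

section TerminalDist

variable {T p q : ℝ} {d : ℕ}

/-- The distance `|t - T| + ‖ω_{t∧·} - η‖_q` from `θ = (t, ω)` to `(T, η)`: it extends
`d_q(θ, (T, η))` to paths `η` that need not be continuous. -/
def terminalDist (T q : ℝ) {d : ℕ} (θ : Theta T d) (η : ℝ → E d) : ℝ :=
  |θ.t - T| + pnorm T q (θ.stopped - η)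

lemma terminalDist_nonneg (q : ℝ) (θ : Theta T d) (η : ℝ → E d) : 0 ≤ terminalDist T q θ η :=
  add_nonneg (abs_nonneg _) (pnorm_nonneg θ.nonneg_horizon _ _)

lemma terminalDist_of_t_eq {θ : Theta T d} (ht : θ.t = T) (q : ℝ) (η : ℝ → E d) :
    terminalDist T q θ η = pnorm T q (η - θ.path) := by
  rw [terminalDist, ht, sub_self, abs_zero, zero_add, pnorm_sub_comm]
  exact pnorm_congr θ.nonneg_horizon fun r hr => by
    simp only [Pi.sub_apply, Theta.stopped_eqOn_path ht hr]

lemma terminalDist_le_mul_terminalDist (hp : 0 < p) (hpq : p ≤ q) {θ : Theta T d}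
    (ht : θ.t = T) {η : ℝ → E d} (hη : MemLp η (ENNReal.ofReal q) (pathMeasure T)) :
    terminalDist T p θ η ≤ (T + 1) ^ (1 / p - 1 / q) * terminalDist T q θ η := by
  have hT := θ.nonneg_horizon
  rw [terminalDist_of_t_eq ht, terminalDist_of_t_eq ht]
  exact pnorm_le_mul_pnorm hT hp hpq (hη.sub (memLp_pathMeasure_of_continuousOn hT θ.cont _))

lemma dpDist_self (hp : 0 < p) (θ : Theta T d) : dpDist T p θ θ = 0 := by
  simp [dpDist, pnorm, pnormPow, hp.ne']

lemma dpDist_le_terminalDist_add (hp : 1 ≤ p) (θ θ' : Theta T d) {η : ℝ → E d}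
    (hη : MemLp η (ENNReal.ofReal p) (pathMeasure T)) :
    dpDist T p θ θ' ≤ terminalDist T p θ η + terminalDist T p θ' η := by
  have htime : |θ.t - θ'.t| ≤ |θ.t - T| + |θ'.t - T| := by
    simpa only [Real.dist_eq] using dist_triangle_right θ.t θ'.t T
  have hpath := pnorm_sub_le_add θ.nonneg_horizon hp (θ.memLp_stopped _) hη (θ'.memLp_stopped _)
  rw [pnorm_sub_comm T p η] at hpath
  rw [terminalDist, terminalDist]
  exact (add_le_add htime hpath).trans_eq (add_add_add_comm _ _ _ _)

lemma exists_terminalDist_le (hT : 0 < T) (hq : 1 ≤ q) {η : ℝ → E d}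
    (hη : MemLp η (ENNReal.ofReal q) (pathMeasure T)) {ε : ℝ} (hε : 0 < ε) :
    ∃ θ : Theta T d, θ.t = T ∧ terminalDist T q θ η ≤ ε := by
  have hq₀ : 0 < q := by linarith
  set c : ℝ := (T + 1) ^ (1 / q)
  have hc : 0 < c := by positivity
  have hε' : 0 < ε / (1 + c) := by positivity
  obtain ⟨g, hg_cont, hg_zero, hg⟩ := exists_continuous_apply_eq_zero_eLpNorm_sub_le
    (pathMeasure_singleton_zero hT) hη (ENNReal.one_le_ofReal.2 hq) ENNReal.ofReal_ne_top
    (ENNReal.ofReal_pos.2 hε').ne'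
  have hη_sub : MemLp (η - g) (ENNReal.ofReal q) (pathMeasure T) :=
    hη.sub (memLp_pathMeasure_of_continuousOn hT.le hg_cont.continuousOn _)
  refine ⟨⟨T, g, ⟨hT.le, le_rfl⟩, hg_cont.continuousOn, hg_zero⟩, rfl, ?_⟩
  rw [terminalDist_of_t_eq rfl, pnorm_eq_lpNorm hT.le hq₀ hη_sub,
    ← toReal_eLpNorm hη_sub.1]
  refine ENNReal.toReal_le_of_le_ofReal hε.le (hg.trans_eq ?_)
  rw [ENNReal.toReal_ofReal hq₀.le, ← ofReal_measureReal, pathMeasure_real_univ hT.le,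
    ENNReal.ofReal_rpow_of_pos (by positivity), ← ENNReal.ofReal_mul hε'.le,
    ← ENNReal.ofReal_add hε'.le (by positivity)]
  congr 1
  field_simp
  ring

end TerminalDist

section TimeChange

variable {T t s r : ℝ} {ℓ : ℝ → ℝ}

lemma supId_nonneg (T : ℝ) (ℓ : ℝ → ℝ) : 0 ≤ supId T ℓ :=
  Real.iSup_nonneg fun _ => abs_nonneg _

lemma supId_id (T : ℝ) : supId T id = 0 := by simp [supId]

lemma abs_sub_le_supId (hℓ : MonotoneOn ℓ (Icc 0 T)) (hr : r ∈ Icc 0 T) :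
    |ℓ r - r| ≤ supId T ℓ := by
  have hT : 0 ≤ T := hr.1.trans hr.2
  refine le_ciSup (f := fun y : Icc (0 : ℝ) T => |ℓ y - y|) ⟨|ℓ 0| + |ℓ T| + T, ?_⟩ ⟨r, hr⟩
  rintro _ ⟨⟨y, hy⟩, rfl⟩
  have hℓy : |ℓ y| ≤ |ℓ 0| + |ℓ T| :=
    (abs_le_max_abs_abs (hℓ ⟨le_rfl, hT⟩ hy hy.1) (hℓ hy ⟨hT, le_rfl⟩ hy.2)).trans
      (max_le_add_of_nonneg (abs_nonneg _) (abs_nonneg _))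
  calc |ℓ y - y| ≤ |ℓ y| + |y| := abs_sub _ _
    _ ≤ |ℓ 0| + |ℓ T| + T := add_le_add hℓy (by rw [abs_of_nonneg hy.1]; exact hy.2)

lemma abs_min_sub_le_supId (hℓ : MonotoneOn ℓ (Icc 0 T)) (hr : r ∈ Icc 0 T) :
    |min T (ℓ r) - r| ≤ supId T ℓ := by
  have h := abs_min_sub_min_le_max T (ℓ r) T r
  rw [min_eq_right hr.2, sub_self, abs_zero, max_eq_right (abs_nonneg _)] at h
  exact h.trans (abs_sub_le_supId hℓ hr)

lemma id_mem_LL (hT : 0 < T) : id ∈ LL T T T := by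
  rw [LL, if_neg hT.ne']
  exact ⟨monotoneOn_id, strictMonoOn_id, bijOn_id _, fun _ _ => by simp⟩

lemma monotoneOn_of_mem_LL (hℓ : ℓ ∈ LL T t s) : MonotoneOn ℓ (Icc 0 T) := by
  by_cases hs : s = 0
  · rw [LL, if_pos hs, mem_singleton_iff] at hℓ
    subst hℓ
    intro a _ b _ hab
    dsimp only
    split_ifs <;> linarith
  · rw [LL, if_neg hs] at hℓ
    exact hℓ.1

lemma apply_eq_of_mem_LL (ht : 0 ≤ t) (hs : 0 ≤ s) (hℓ : ℓ ∈ LL T t s) : ℓ t = s := by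
  rcases hs.eq_or_lt with rfl | hs
  · rw [LL, if_pos rfl, mem_singleton_iff] at hℓ
    simp [hℓ]
  · rw [LL, if_neg hs.ne'] at hℓ
    obtain ⟨-, hmono, hbij, -⟩ := hℓ
    obtain ⟨y, hy, rfl⟩ := hbij.surjOn (right_mem_Icc.2 hs.le)
    exact (hbij.mapsTo (right_mem_Icc.2 ht)).2.antisymm
      (hmono.monotoneOn hy (right_mem_Icc.2 ht) hy.2)

lemma abs_sub_le_supId_of_mem_LL (ht : t ∈ Icc 0 T) (hs : 0 ≤ s) (hℓ : ℓ ∈ LL T t s) :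
    |t - s| ≤ supId T ℓ := by
  have h := abs_sub_le_supId (monotoneOn_of_mem_LL hℓ) ht
  rwa [apply_eq_of_mem_LL ht.1 hs hℓ, abs_sub_comm] at h

lemma min_apply_eq_of_mem_LL (ht : t ∈ Icc 0 T) (hℓ : ℓ ∈ LL T t T) : min T (ℓ T) = T := by
  have hT : 0 ≤ T := ht.1.trans ht.2
  have h := monotoneOn_of_mem_LL hℓ ht (right_mem_Icc.2 hT) ht.2
  exact min_eq_left ((apply_eq_of_mem_LL ht.1 hT hℓ).symm.trans_le h)

end TimeChange

section Penalization

variable {T p s c : ℝ} {d : ℕ} {η : ℝ → E d} {θ : Theta T d} {ℓ : ℝ → ℝ}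

lemma Phi_nonneg (p s : ℝ) (η : ℝ → E d) (θ : Theta T d) (ℓ : ℝ → ℝ) : 0 ≤ Phi T p s η θ ℓ :=
  add_nonneg (Real.rpow_nonneg (supId_nonneg T ℓ) _) (pnormPow_nonneg θ.nonneg_horizon _ _)

lemma Phi_id (hp : 0 < p) (ht : θ.t = T) :
    Phi T p T η θ id = terminalDist T (p + 1) θ η ^ (p + 1) := by
  have hT := θ.nonneg_horizon
  have hpath : pnorm T (p + 1) (fun r => η (min T r) - θ.stopped r) =
      pnorm T (p + 1) (η - θ.path) :=
    pnorm_congr hT fun r hr => by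
      simp only [Pi.sub_apply, min_eq_right hr.2, Theta.stopped_eqOn_path ht hr]
  rw [Phi, supId_id, Real.zero_rpow (by positivity), zero_add, terminalDist_of_t_eq ht, ← hpath,
    pnorm_rpow_self hT (by positivity)]
  rfl

lemma supId_le_of_Phi_le (hp : 0 < p) (hΦ : Phi T p s η θ ℓ ≤ c) :
    supId T ℓ ≤ c ^ ((3 * p + 3) / 2) := by
  have h : supId T ℓ ^ (2 / (3 * p + 3)) ≤ c :=
    (le_add_of_nonneg_right (pnormPow_nonneg θ.nonneg_horizon _ _)).trans hΦ
  rwa [← inv_div, Real.le_rpow_inv_iff_of_pos (supId_nonneg T ℓ)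
    ((Phi_nonneg p s η θ ℓ).trans hΦ) (by positivity)]

lemma pnorm_le_of_Phi_le (hp : 0 < p) (hΦ : Phi T p s η θ ℓ ≤ c) :
    pnorm T (p + 1) ((fun r => η (min s (ℓ r))) - θ.stopped) ≤ c ^ (1 / (p + 1)) :=
  Real.rpow_le_rpow (pnormPow_nonneg θ.nonneg_horizon _ _)
    ((le_add_of_nonneg_left (Real.rpow_nonneg (supId_nonneg T ℓ) _)).trans hΦ) (by positivity)

/-- Pass from `ω_{t∧·}` to `η` through the time-changed path `η_{T∧ℓ(·)}`. -/
lemma terminalDist_le_of_Phi_le (hp : 1 ≤ p) (hℓ : ℓ ∈ LL T θ.t T)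
    (hη : MemLp η (ENNReal.ofReal p) (pathMeasure T))
    (hηℓ : MemLp (fun r => η (min T (ℓ r))) (ENNReal.ofReal (p + 1)) (pathMeasure T))
    (hΦ : Phi T p T η θ ℓ ≤ c) :
    terminalDist T p θ η ≤ c ^ ((3 * p + 3) / 2) +
      (T + 1) ^ (1 / p - 1 / (p + 1)) * c ^ (1 / (p + 1)) +
      pnorm T p ((fun r => η (min T (ℓ r))) - η) := by
  have hT := θ.nonneg_horizon
  have hp₀ : 0 < p := by linarith
  have htime : |θ.t - T| ≤ c ^ ((3 * p + 3) / 2) :=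
    (abs_sub_le_supId_of_mem_LL θ.ht hT hℓ).trans (supId_le_of_Phi_le hp₀ hΦ)
  have hpath : pnorm T p (θ.stopped - fun r => η (min T (ℓ r))) ≤
      (T + 1) ^ (1 / p - 1 / (p + 1)) * c ^ (1 / (p + 1)) := by
    rw [pnorm_sub_comm]
    refine (pnorm_le_mul_pnorm hT hp₀ (by linarith) (hηℓ.sub (θ.memLp_stopped _))).trans ?_
    gcongr
    exact pnorm_le_of_Phi_le hp₀ hΦ
  have htri := pnorm_sub_le_add hT hp (θ.memLp_stopped _)
    (hηℓ.mono_exponent (ENNReal.ofReal_le_ofReal (by linarith))) hη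
  rw [terminalDist]
  linarith

end Penalization

section Regularization

variable {T p M L δ : ℝ} {d n : ℕ} {u : Theta T d → ℝ} {ρ : ℝ → ℝ} {η : ℝ → E d}

lemma sub_mul_Phi_le_reg (hM : ∀ θ, u θ ≤ M) {s : ℝ} {θ : Theta T d} {ℓ : ℝ → ℝ} (ht : θ.t ≠ 0)
    (hℓ : ℓ ∈ LL T θ.t s) : u θ - n * Phi T p s η θ ℓ ≤ reg T p u n s η := by
  refine le_csSup ⟨M, ?_⟩ ⟨θ, ℓ, fun h => ht (congrArg Prod.fst h), hℓ, rfl⟩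
  rintro _ ⟨θ', ℓ', -, -, rfl⟩
  have := mul_nonneg n.cast_nonneg (Phi_nonneg p s η θ' ℓ')
  linarith [hM θ']

lemma reg_le (hT : 0 < T) {b : ℝ}
    (h : ∀ θ : Theta T d, ∀ ℓ ∈ LL T θ.t T, u θ - n * Phi T p T η θ ℓ ≤ b) :
    reg T p u n T η ≤ b := by
  refine csSup_le ⟨_, ⟨T, 0, ⟨hT.le, le_rfl⟩, continuousOn_const, rfl⟩, id,
    fun h => hT.ne' (congrArg Prod.fst h), id_mem_LL hT, rfl⟩ ?_
  rintro _ ⟨θ, ℓ, -, hℓ, rfl⟩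
  exact h θ ℓ hℓ

lemma abs_le_of_isExtValue (hM : ∀ θ, |u θ| ≤ M) (hL : IsExtValue T p u η L) : |L| ≤ M := by
  obtain ⟨θ, -, -, hu⟩ := hL
  exact le_of_tendsto' hu.abs fun k => hM (θ k)

lemma abs_sub_le_of_terminalDist_lt (hp : 1 ≤ p) (hρ : Monotone ρ)
    (hu : ∀ θ θ' : Theta T d, |u θ - u θ'| ≤ ρ (dpDist T p θ θ'))
    (hη : MemLp η (ENNReal.ofReal p) (pathMeasure T)) (hL : IsExtValue T p u η L)
    {θ : Theta T d} (hθ : terminalDist T p θ η < δ) : |u θ - L| ≤ ρ δ := by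
  obtain ⟨θk, ht, hdist, hlim⟩ := hL
  refine le_of_tendsto (hlim.const_sub (u θ)).abs ?_
  filter_upwards [hdist.eventually_lt_const (sub_pos.2 hθ)] with k hk
  have hk' : terminalDist T p (θk k) η < δ - terminalDist T p θ η :=
    (terminalDist_of_t_eq (ht k) p η).trans_lt hk
  have hdp := dpDist_le_terminalDist_add hp θ (θk k) hη
  exact (hu θ (θk k)).trans (hρ (by linarith))

lemma sub_sub_le_reg_of_isExtValue (hT : 0 < T) (hp : 1 ≤ p) (hM : ∀ θ, u θ ≤ M)
    (hρ : Monotone ρ) (hu : ∀ θ θ' : Theta T d, |u θ - u θ'| ≤ ρ (dpDist T p θ θ'))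
    (hη : MemLp η (ENNReal.ofReal (p + 1)) (pathMeasure T)) (hL : IsExtValue T p u η L)
    {ε : ℝ} (hε : 0 < ε) :
    L - ρ (((T + 1) ^ (1 / p - 1 / (p + 1)) + 1) * ε) - n * ε ^ (p + 1) ≤ reg T p u n T η := by
  have hp₀ : 0 < p := by linarith
  obtain ⟨θ, ht, hθ⟩ := exists_terminalDist_le hT (by linarith) hη hε
  have hdist : terminalDist T p θ η < ((T + 1) ^ (1 / p - 1 / (p + 1)) + 1) * ε :=
    calc terminalDist T p θ η
        ≤ (T + 1) ^ (1 / p - 1 / (p + 1)) * terminalDist T (p + 1) θ η :=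
          terminalDist_le_mul_terminalDist hp₀ (by linarith) ht hη
      _ ≤ (T + 1) ^ (1 / p - 1 / (p + 1)) * ε := by gcongr
      _ < ((T + 1) ^ (1 / p - 1 / (p + 1)) + 1) * ε := by linarith
  have hmod := abs_sub_le_of_terminalDist_lt hp hρ hu
    (hη.mono_exponent (ENNReal.ofReal_le_ofReal (by linarith))) hL hdist
  have hΦ : n * Phi T p T η θ id ≤ n * ε ^ (p + 1) := by
    rw [Phi_id hp₀ ht]
    have := terminalDist_nonneg (p + 1) θ η
    gcongr
  have hreg : u θ - n * Phi T p T η θ id ≤ reg T p u n T η :=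
    sub_mul_Phi_le_reg hM (ht.trans_ne hT.ne') (by rw [ht]; exact id_mem_LL hT)
  linarith [(abs_le.1 hmod).1]

lemma le_reg_of_isExtValue (hT : 0 < T) (hp : 1 ≤ p) (hM : ∀ θ, u θ ≤ M) (hρ : Monotone ρ)
    (hρ₀ : Tendsto ρ (𝓝[>] 0) (𝓝 0))
    (hu : ∀ θ θ' : Theta T d, |u θ - u θ'| ≤ ρ (dpDist T p θ θ'))
    (hη : MemLp η (ENNReal.ofReal (p + 1)) (pathMeasure T)) (hL : IsExtValue T p u η L) :
    L ≤ reg T p u n T η := by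
  set H : ℝ := (T + 1) ^ (1 / p - 1 / (p + 1)) + 1
  have hH : 0 < H := by positivity
  have hmod : Tendsto (fun ε => ρ (H * ε)) (𝓝[>] 0) (𝓝 0) :=
    hρ₀.comp (tendsto_iff_comap.2 (comap_mulLeft_nhdsGT_zero hH).ge)
  have hpow : Tendsto (fun ε : ℝ => n * ε ^ (p + 1)) (𝓝[>] 0) (𝓝 0) := by
    have h := (Real.continuousAt_rpow_const 0 (p + 1) (Or.inr (by linarith))).const_mul (n : ℝ)
    simpa [Real.zero_rpow (by linarith : p + 1 ≠ 0)] using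
      (ContinuousAt.tendsto h).mono_left nhdsWithin_le_nhds
  have hlim : Tendsto (fun ε => L - ρ (H * ε) - n * ε ^ (p + 1)) (𝓝[>] 0) (𝓝 L) := by
    simpa only [sub_zero] using (hmod.const_sub L).sub hpow
  refine le_of_tendsto hlim ?_
  filter_upwards [self_mem_nhdsWithin] with ε hε
  exact sub_sub_le_reg_of_isExtValue hT hp hM hρ hu hη hL hε

lemma reg_sub_le_of_isExtValue (hT : 0 < T) (hp : 1 ≤ p) (hM : ∀ θ, |u θ| ≤ M) (hρ : Monotone ρ)
    (hu : ∀ θ θ' : Theta T d, |u θ - u θ'| ≤ ρ (dpDist T p θ θ'))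
    (hη : MemLp η (ENNReal.ofReal p) (pathMeasure T)) (hL : IsExtValue T p u η L) (hδ : 0 ≤ δ)
    (hdist : ∀ θ : Theta T d, ∀ ℓ ∈ LL T θ.t T,
      n * Phi T p T η θ ℓ ≤ 2 * M → terminalDist T p θ η < δ) :
    reg T p u n T η - L ≤ ρ δ := by
  rw [sub_le_iff_le_add]
  refine reg_le hT fun θ ℓ hℓ => ?_
  have hpen : 0 ≤ n * Phi T p T η θ ℓ := mul_nonneg n.cast_nonneg (Phi_nonneg p T η θ ℓ)
  rcases le_or_gt (n * Phi T p T η θ ℓ) (2 * M) with hsmall | hlarge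
  · have := abs_sub_le_of_terminalDist_lt hp hρ hu hη hL (hdist θ ℓ hℓ hsmall)
    linarith [le_abs_self (u θ - L)]
  · have hρδ : 0 ≤ ρ δ := by
      refine (abs_nonneg _).trans ((hu θ θ).trans (hρ ?_))
      rwa [dpDist_self (by linarith)]
    have hLM := (abs_le.1 (abs_le_of_isExtValue hM hL)).1
    linarith [(abs_le.1 (hM θ)).2]

end Regularization

section PiecewiseConstant

variable {T p δ : ℝ} {d i : ℕ} (s : Fin i → ℝ) (x : Fin i → E d)

lemma norm_pcPath_le (r : ℝ) : ‖pcPath s x r‖ ≤ ∑ j, ‖x j‖ :=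
  (norm_sum_le _ _).trans (Finset.sum_le_sum fun j _ => by split_ifs <;> simp)

lemma measurable_pcPath : Measurable (pcPath s x) :=
  Finset.measurable_fun_sum _ fun _ _ =>
    Measurable.ite measurableSet_Ici measurable_const measurable_const

lemma memLp_pcPath_comp (hT : 0 ≤ T) {g : ℝ → ℝ} (hg : MonotoneOn g (Icc 0 T)) (q : ENNReal) :
    MemLp (fun r => pcPath s x (g r)) q (pathMeasure T) :=
  memLp_pathMeasure_of_bound hT
    ((measurable_pcPath s x).comp_aemeasurable (aemeasurable_restrict_of_monotoneOn
      measurableSet_Ioc (hg.mono Ioc_subset_Icc_self))).aestronglyMeasurable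
    (fun r _ => norm_pcPath_le s x (g r)) q

lemma norm_pcPath_sub_le {a b : ℝ} (hab : |a - b| ≤ δ) :
    ‖pcPath s x a - pcPath s x b‖ ≤
      ∑ j, indicator (Metric.closedBall (s j) δ) (fun _ => ‖x j‖) b := by
  rw [pcPath, pcPath, ← Finset.sum_sub_distrib]
  refine (norm_sum_le _ _).trans (Finset.sum_le_sum fun j _ => ?_)
  by_cases hb : b ∈ Metric.closedBall (s j) δ
  · rw [indicator_of_mem hb]
    split_ifs <;> simp
  · have hside : s j ≤ a ↔ s j ≤ b := by
      rw [Metric.mem_closedBall, Real.dist_eq, abs_le, not_and_or] at hb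
      rw [abs_le] at hab
      constructor <;> intro <;> rcases hb with hb | hb <;> linarith
    simp only [hside, sub_self, norm_zero, indicator_of_notMem hb, le_refl]

lemma norm_pcPath_sub_rpow_le (hp : 1 ≤ p) {a b : ℝ} (hab : |a - b| ≤ δ) :
    ‖pcPath s x a - pcPath s x b‖ ^ p ≤
      (i : ℝ) ^ (p - 1) * ∑ j, indicator (Metric.closedBall (s j) δ) (fun _ => ‖x j‖ ^ p) b := by
  have hp₀ : p ≠ 0 := by linarith
  calc ‖pcPath s x a - pcPath s x b‖ ^ p
      ≤ (∑ j, indicator (Metric.closedBall (s j) δ) (fun _ => ‖x j‖) b) ^ p :=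
        Real.rpow_le_rpow (norm_nonneg _) (norm_pcPath_sub_le s x hab) (by linarith)
    _ ≤ (i : ℝ) ^ (p - 1) *
          ∑ j, indicator (Metric.closedBall (s j) δ) (fun _ => ‖x j‖) b ^ p := by
        simpa only [Finset.card_univ, Fintype.card_fin] using
          Real.rpow_sum_le_const_mul_sum_rpow_of_nonneg Finset.univ hp fun j _ =>
            indicator_nonneg (fun _ _ => norm_nonneg (x j)) b
    _ = (i : ℝ) ^ (p - 1) *
          ∑ j, indicator (Metric.closedBall (s j) δ) (fun _ => ‖x j‖ ^ p) b := by
        classical simp only [indicator_apply, apply_ite (· ^ p), Real.zero_rpow hp₀]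

lemma setIntegral_indicator_closedBall_le (A : Set ℝ) (a : ℝ) (hδ : 0 ≤ δ) {c : ℝ} (hc : 0 ≤ c) :
    ∫ r in A, indicator (Metric.closedBall a δ) (fun _ => c) r ≤ c * (2 * δ) := by
  rw [integral_indicator_const _ Metric.isClosed_closedBall.measurableSet, smul_eq_mul, mul_comm,
    ← Real.volume_real_closedBall (a := a) hδ,
    measureReal_restrict_apply Metric.isClosed_closedBall.measurableSet]
  gcongr
  · exact measure_closedBall_lt_top.ne
  · exact inter_subset_left

/-- A time change by at most `δ` is felt only within distance `δ` of the jump times. -/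
lemma pnormPow_pcPath_comp_sub_le (hT : 0 ≤ T) (hp : 1 ≤ p) {g : ℝ → ℝ} (hgT : g T = T)
    (hg : ∀ r ∈ Icc 0 T, |g r - r| ≤ δ) :
    pnormPow T p ((fun r => pcPath s x (g r)) - pcPath s x) ≤
      (i : ℝ) ^ (p - 1) * ((∑ j, ‖x j‖ ^ p) * (2 * δ)) := by
  have hδ : 0 ≤ δ := (abs_nonneg _).trans (hg T (right_mem_Icc.2 hT))
  have hint : ∀ j, Integrable (indicator (Metric.closedBall (s j) δ) fun _ => ‖x j‖ ^ p)
      (volume.restrict (Ioc 0 T)) := fun j =>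
    (integrable_const _).indicator Metric.isClosed_closedBall.measurableSet
  calc pnormPow T p ((fun r => pcPath s x (g r)) - pcPath s x)
      = ∫ r in Ioc 0 T, ‖pcPath s x (g r) - pcPath s x r‖ ^ p := by
        simp only [pnormPow, Pi.sub_apply, hgT, sub_self, norm_zero, zero_add,
          Real.zero_rpow (by linarith : p ≠ 0), intervalIntegral.integral_of_le hT]
    _ ≤ ∫ r in Ioc 0 T, (i : ℝ) ^ (p - 1) *
          ∑ j, indicator (Metric.closedBall (s j) δ) (fun _ => ‖x j‖ ^ p) r :=
        integral_mono_of_nonneg (Eventually.of_forall fun _ => by positivity)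
          ((integrable_finsetSum _ fun j _ => hint j).const_mul _)
          (ae_restrict_of_forall_mem measurableSet_Ioc fun r hr =>
            norm_pcPath_sub_rpow_le s x hp (hg r (Ioc_subset_Icc_self hr)))
    _ ≤ (i : ℝ) ^ (p - 1) * ((∑ j, ‖x j‖ ^ p) * (2 * δ)) := by
        rw [integral_const_mul, integral_finsetSum _ fun j _ => hint j, Finset.sum_mul]
        gcongr with j
        exact setIntegral_indicator_closedBall_le _ _ hδ (by positivity)

end PiecewiseConstant

section Rate

variable {T p K N : ℝ}

lemma rpow_mul_mul_rpow_le (hp : 1 ≤ p) (hN : 1 ≤ N) {k S : ℝ} (hk₀ : 0 ≤ k)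
    (hk : k ≤ N ^ (1 + 1 / (5 * p))) (hS₀ : 0 ≤ S)
    (hS : S ^ (1 / p) ≤ N ^ (1 / 2 + 6 / (5 * p))) :
    k ^ (p - 1) * S * N ^ (-((3 * p + 3) / 2)) ≤ N ^ (-(1 / 10 : ℝ)) := by
  have hN₀ : 0 < N := by linarith
  have hp₀ : 0 < p := by linarith
  have hk' : k ^ (p - 1) ≤ N ^ ((1 + 1 / (5 * p)) * (p - 1)) := by
    rw [Real.rpow_mul hN₀.le]
    exact Real.rpow_le_rpow hk₀ hk (by linarith)
  have hS' : S ≤ N ^ ((1 / 2 + 6 / (5 * p)) * p) := by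
    rw [Real.rpow_mul hN₀.le]
    rwa [one_div, Real.rpow_inv_le_iff_of_pos hS₀ (by positivity) hp₀] at hS
  have hexp : (1 + 1 / (5 * p)) * (p - 1) + (1 / 2 + 6 / (5 * p)) * p + -((3 * p + 3) / 2) =
      -(11 / 10) - 1 / (5 * p) := by
    field_simp
    ring
  calc k ^ (p - 1) * S * N ^ (-((3 * p + 3) / 2))
      ≤ N ^ ((1 + 1 / (5 * p)) * (p - 1)) * N ^ ((1 / 2 + 6 / (5 * p)) * p) *
          N ^ (-((3 * p + 3) / 2)) := by gcongr
    _ = N ^ (-(11 / 10) - 1 / (5 * p)) := by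
        rw [← Real.rpow_add hN₀, ← Real.rpow_add hN₀, hexp]
    _ ≤ N ^ (-(1 / 10 : ℝ)) := by
        have : 0 < 1 / (5 * p) := by positivity
        exact Real.rpow_le_rpow_of_exponent_le hN (by linarith)

lemma pnorm_pcPath_comp_sub_le (hT : 0 ≤ T) (hp : 1 ≤ p) (hN : 1 ≤ N) (hK : 0 ≤ K) {d i : ℕ}
    {s : Fin i → ℝ} {x : Fin i → E d} (hi : (i : ℝ) ≤ N ^ (1 + 1 / (5 * p)))
    (hx : (∑ j, ‖x j‖ ^ p) ^ (1 / p) ≤ N ^ (1 / 2 + 6 / (5 * p))) {g : ℝ → ℝ} (hgT : g T = T)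
    (hg : ∀ r ∈ Icc 0 T, |g r - r| ≤ K * N ^ (-((3 * p + 3) / 2))) :
    pnorm T p ((fun r => pcPath s x (g r)) - pcPath s x) ≤
      (2 * K) ^ (1 / p) * N ^ (-(1 / (10 * p))) := by
  have hN₀ : 0 < N := by linarith
  have hbound : pnormPow T p ((fun r => pcPath s x (g r)) - pcPath s x) ≤
      2 * K * N ^ (-(1 / 10 : ℝ)) :=
    calc pnormPow T p ((fun r => pcPath s x (g r)) - pcPath s x)
        ≤ (i : ℝ) ^ (p - 1) *
            ((∑ j, ‖x j‖ ^ p) * (2 * (K * N ^ (-((3 * p + 3) / 2))))) :=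
          pnormPow_pcPath_comp_sub_le s x hT hp hgT hg
      _ = 2 * K * ((i : ℝ) ^ (p - 1) * (∑ j, ‖x j‖ ^ p) * N ^ (-((3 * p + 3) / 2))) := by ring
      _ ≤ 2 * K * N ^ (-(1 / 10 : ℝ)) := by
          gcongr
          exact rpow_mul_mul_rpow_le hp hN i.cast_nonneg hi (by positivity) hx
  calc pnorm T p ((fun r => pcPath s x (g r)) - pcPath s x)
      ≤ (2 * K * N ^ (-(1 / 10 : ℝ))) ^ (1 / p) :=
        Real.rpow_le_rpow (pnormPow_nonneg hT _ _) hbound (by positivity)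
    _ = (2 * K) ^ (1 / p) * N ^ (-(1 / (10 * p))) := by
        rw [Real.mul_rpow (by positivity) (by positivity), ← Real.rpow_mul hN₀.le]
        congr 2
        field_simp

/-- The sum `N^{-(3p+3)/2} + N^{-1/(p+1)} + N^{-1/(10p)}`, which measures how far a point with
penalization of order `1/N` can be from an admissible piecewise constant path. -/
def rate (p N : ℝ) : ℝ :=
  N ^ (-((3 * p + 3) / 2)) + N ^ (-(1 / (p + 1))) + N ^ (-(1 / (10 * p)))

/-- The constant in front of `rate p N` for points whose penalization is at most `K/N`: one
summand for each of the time shift, the path distance and the effect of the time change. -/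
def rateConst (T p K : ℝ) : ℝ :=
  K ^ ((3 * p + 3) / 2) + (T + 1) ^ (1 / p - 1 / (p + 1)) * K ^ (1 / (p + 1)) +
    (2 * K ^ ((3 * p + 3) / 2)) ^ (1 / p)

lemma rate_pos (p : ℝ) (hN : 0 < N) : 0 < rate p N := by
  rw [rate]
  positivity

lemma rateConst_nonneg (hT : 0 ≤ T) (p : ℝ) (hK : 0 ≤ K) : 0 ≤ rateConst T p K := by
  rw [rateConst]
  positivity

lemma add_add_le_rateConst_mul_rate (hT : 0 ≤ T) (hK : 0 ≤ K) (hN : 0 < N) :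
    K ^ ((3 * p + 3) / 2) * N ^ (-((3 * p + 3) / 2)) +
      (T + 1) ^ (1 / p - 1 / (p + 1)) * (K ^ (1 / (p + 1)) * N ^ (-(1 / (p + 1)))) +
      (2 * K ^ ((3 * p + 3) / 2)) ^ (1 / p) * N ^ (-(1 / (10 * p))) ≤
    rateConst T p K * rate p N := by
  have hmul {a b c x y z : ℝ} (ha : 0 ≤ a) (hb : 0 ≤ b) (hc : 0 ≤ c) (hx : 0 ≤ x) (hy : 0 ≤ y)
      (hz : 0 ≤ z) : a * x + b * y + c * z ≤ (a + b + c) * (x + y + z) := by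
    nlinarith [mul_nonneg ha hy, mul_nonneg ha hz, mul_nonneg hb hx, mul_nonneg hb hz,
      mul_nonneg hc hx, mul_nonneg hc hy]
  rw [rateConst, rate, ← mul_assoc]
  apply hmul <;> positivity

lemma terminalDist_pcPath_le (hp : 1 ≤ p) (hN : 1 ≤ N) {d i : ℕ} {s : Fin i → ℝ} {x : Fin i → E d}
    (hi : (i : ℝ) ≤ N ^ (1 + 1 / (5 * p)))
    (hx : (∑ j, ‖x j‖ ^ p) ^ (1 / p) ≤ N ^ (1 / 2 + 6 / (5 * p))) {θ : Theta T d} {ℓ : ℝ → ℝ}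
    (hℓ : ℓ ∈ LL T θ.t T) (hΦ : N * Phi T p T (pcPath s x) θ ℓ ≤ K) :
    terminalDist T p θ (pcPath s x) ≤ rateConst T p K * rate p N := by
  have hT := θ.nonneg_horizon
  have hN₀ : 0 < N := by linarith
  have hK : 0 ≤ K := (mul_nonneg hN₀.le (Phi_nonneg _ _ _ _ _)).trans hΦ
  have hdiv (a : ℝ) : (K / N) ^ a = K ^ a * N ^ (-a) := by
    rw [Real.div_rpow hK hN₀.le, Real.rpow_neg hN₀.le, div_eq_mul_inv]
  have hΦ' : Phi T p T (pcPath s x) θ ℓ ≤ K / N := (le_div_iff₀' hN₀).2 hΦ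
  have hmono := monotoneOn_of_mem_LL hℓ
  have hclose (r : ℝ) (hr : r ∈ Icc 0 T) :
      |min T (ℓ r) - r| ≤ K ^ ((3 * p + 3) / 2) * N ^ (-((3 * p + 3) / 2)) :=
    (abs_min_sub_le_supId hmono hr).trans
      ((supId_le_of_Phi_le (by linarith) hΦ').trans_eq (hdiv _))
  have hshift := pnorm_pcPath_comp_sub_le (s := s) hT hp hN (by positivity) hi hx
    (min_apply_eq_of_mem_LL θ.ht hℓ) hclose
  have hdist := terminalDist_le_of_Phi_le hp hℓ (memLp_pcPath_comp s x hT monotoneOn_id _)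
    (memLp_pcPath_comp s x hT (monotoneOn_const.min hmono) _) hΦ'
  rw [hdiv, hdiv] at hdist
  exact hdist.trans ((add_le_add_right hshift _).trans (add_add_le_rateConst_mul_rate hT hK hN₀))

end Rate

theorem stmt7_general (T : ℝ) (hT : 0 < T) (p : ℝ) (hp : 1 ≤ p) (M : ℝ) :
    ∃ C > 0, ∀ (d : ℕ) (u : Theta T d → ℝ), (∀ θ, |u θ| ≤ M) →
    ∀ ρ : ℝ → ℝ, Monotone ρ → Tendsto ρ (𝓝[>] 0) (𝓝 0) →
      (∀ θ θ', |u θ - u θ'| ≤ ρ (dpDist T p θ θ')) →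
    ∀ n : ℕ, 1 ≤ n →
    ∀ (i : ℕ) (s : Fin i → ℝ) (x : Fin i → E d),
      (i : ℝ) ≤ (n : ℝ) ^ (1 + 1 / (5 * p)) →
      (∑ j, ‖x j‖ ^ p) ^ (1 / p) ≤ (n : ℝ) ^ (1 / 2 + 6 / (5 * p)) →
    ∀ L : ℝ, IsExtValue T p u (pcPath s x) L →
      0 ≤ reg T p u n T (pcPath s x) - L ∧
      reg T p u n T (pcPath s x) - L ≤ ρ (C * rate p n) := by
  have hC := rateConst_nonneg hT.le p (by positivity : 0 ≤ 2 * |M|)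
  refine ⟨rateConst T p (2 * |M|) + 1, by positivity,
    fun d u hM ρ hρ hρ₀ hu n hn i s x hi hx L hL => ?_⟩
  have hη (q : ENNReal) : MemLp (pcPath s x) q (pathMeasure T) :=
    memLp_pcPath_comp s x hT.le monotoneOn_id q
  have hn' : (1 : ℝ) ≤ n := by exact_mod_cast hn
  have hrate := rate_pos p (zero_lt_one.trans_le hn')
  refine ⟨sub_nonneg.2 (le_reg_of_isExtValue hT hp (fun θ => (abs_le.1 (hM θ)).2) hρ hρ₀ hu
    (hη _) hL), ?_⟩
  refine reg_sub_le_of_isExtValue hT hp (fun θ => (hM θ).trans (le_abs_self M)) hρ hu (hη _) hL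
    (by positivity) fun θ ℓ hℓ hΦ => ?_
  exact (terminalDist_pcPath_le hp hn' hi hx hℓ hΦ).trans_lt (by linarith)

/-- (Quantitative Lemma 5.6) There is `C > 0`, depending only on `T`, `p` and the
bound `M` on `u`, such that for every `n ≥ 1` and admissible data (`i = m+1 ≤
n^{1+1/(5p)}`, `|x_i|_p ≤ n^{1/2+6/(5p)}`):
`0 ≤ u^{n,λ_i}(T,x) - u^{λ_i}(T,x) ≤ ρ^u(C(n^{-(3p+3)/2} + n^{-1/(p+1)} + n^{-1/(10p)}))`. -/
theorem stmt7 (T : ℝ) (hT : 0 < T) (d : ℕ) (hd : 1 ≤ d) (p : ℝ) (hp : 1 ≤ p) (M : ℝ) :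
    ∃ C > 0, ∀ u : Theta T d → ℝ, (∀ θ : Theta T d, |u θ| ≤ M) →
    ∀ ρ : ℝ → ℝ, Monotone ρ →
      Filter.Tendsto ρ (nhdsWithin 0 (Set.Ioi 0)) (𝓝 0) →
      (∀ θ θ' : Theta T d, |u θ - u θ'| ≤ ρ (dpDist T p θ θ')) →
    ∀ n : ℕ, 1 ≤ n →
    ∀ (m : ℕ) (sVec : Fin (m + 1) → ℝ) (xVec : Fin (m + 1) → E d),
      sVec 0 = 0 → StrictMono sVec → sVec (Fin.last m) ≤ T →
      ((m : ℝ) + 1) ≤ (n : ℝ) ^ ((1 : ℝ) + 1 / (5 * p)) →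
      (∑ j, ‖xVec j‖ ^ p) ^ (1 / p) ≤ (n : ℝ) ^ ((1 : ℝ) / 2 + 6 / (5 * p)) →
    ∀ L : ℝ, IsExtValue T p u (pcPath sVec xVec) L →
      0 ≤ reg T p u n T (pcPath sVec xVec) - L ∧
      reg T p u n T (pcPath sVec xVec) - L ≤
        ρ (C * ((n : ℝ) ^ (-((3 * p + 3) / 2)) + (n : ℝ) ^ (-(1 / (p + 1)))
          + (n : ℝ) ^ (-(1 / (10 * p))))) := by
  obtain ⟨C, hC, h⟩ := stmt7_general T hT p hp M
  exact ⟨C, hC, fun u hM ρ hρ hρ₀ hu n hn m s x _ _ _ hm =>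
    h d u hM ρ hρ hρ₀ hu n hn (m + 1) s x (by exact_mod_cast hm)⟩
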